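/- arXiv:1604.08271 — 7 statements merged into one kernel-verified Lean document; each statement's English description precedes it below -/
import Mathlib

section
/- Let S ⊆ E, let R be a face of the localization 𝒜_S, and let R' be a face of 𝒜 = 𝒜_E. Then R' is contained in the topological closure of R if and only if S^+(R) ⊆ E^+(R') and S^-(R) ⊆ E^-(R'). (Lemma 2.1.) -/
open Set Submodule

noncomputable section

variable {E : Type*} [Fintype E]
variable {M : Type*} [NormedAddCommGroup M] [NormedSpace ℝ M] [FiniteDimensional ℝ M]

/-- The positive closed halfspace `H_e^+` of the hyperplane `H_e`. -/
def Hplus (a : E → (M →ₗ[ℝ] ℝ)) (r : E → ℝ) (e : E) : Set M := {m | a e m + r e ≤ 0}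

/-- The negative closed halfspace `H_e^-` of the hyperplane `H_e`. -/
def Hminus (a : E → (M →ₗ[ℝ] ℝ)) (r : E → ℝ) (e : E) : Set M := {m | 0 ≤ a e m + r e}

/-- `R` is a face of the localization `𝒜_S`: a nonempty fiber of the sign map
`M → SignType^S`, `m ↦ (sign (a e m + r e))_{e ∈ S}`. -/
def IsFace (a : E → (M →ₗ[ℝ] ℝ)) (r : E → ℝ) (S : Set E) (R : Set M) : Prop :=
  ∃ m₀ : M, R = {m : M | ∀ e ∈ S, SignType.sign (a e m + r e) = SignType.sign (a e m₀ + r e)}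

/-- `S^+(R)`: the elements `e ∈ S` with `R ⊆ H_e^+`. -/
def posSet (a : E → (M →ₗ[ℝ] ℝ)) (r : E → ℝ) (S : Set E) (R : Set M) : Set E :=
  {e ∈ S | R ⊆ Hplus a r e}

/-- `S^-(R)`: the elements `e ∈ S` with `R ⊆ H_e^-`. -/
def negSet (a : E → (M →ₗ[ℝ] ℝ)) (r : E → ℝ) (S : Set E) (R : Set M) : Set E :=
  {e ∈ S | R ⊆ Hminus a r e}

/-!
The closure of the cell of `x₀`, cut out by prescribing the signs of continuous affine functions
`f i`, is obtained by weakening each of these sign conditions. The weak conditions are closed, and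
if `x` satisfies them, then `f i` has the same sign throughout the half-open segment from `x₀` to
`x`, so `x` is a limit of points of the cell. The weak conditions can in turn be read off the cell,
as the closed halfspaces that contain it.
-/

section SignCell

open SignType

theorem sign_add_eq_sign_right {α : Type*} [AddZeroClass α] [LinearOrder α]
    [AddLeftStrictMono α] {x y : α} (hneg : y ≤ 0 → x ≤ 0) (hpos : 0 ≤ y → 0 ≤ x) :
    sign (x + y) = sign y := by
  rcases lt_trichotomy y 0 with hy | rfl | hy
  · rw [sign_neg hy, sign_neg (add_neg_of_nonpos_of_neg (hneg hy.le) hy)]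
  · rw [le_antisymm (hneg le_rfl) (hpos le_rfl), add_zero]
  · rw [sign_pos hy, sign_pos (add_pos_of_nonneg_of_pos (hpos hy.le) hy)]

theorem sign_eq_of_mem_openSegment {𝕜 : Type*} [Ring 𝕜] [LinearOrder 𝕜] [IsStrictOrderedRing 𝕜]
    {x y z : 𝕜} (hneg : y ≤ 0 → x ≤ 0) (hpos : 0 ≤ y → 0 ≤ x) (hz : z ∈ openSegment 𝕜 x y) :
    sign z = sign y := by
  obtain ⟨s, t, hs, ht, -, rfl⟩ := hz
  have sign_smul_y : sign (t • y) = sign y := by rw [smul_eq_mul, sign_mul, sign_pos ht, one_mul]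
  rw [← sign_smul_y]
  refine sign_add_eq_sign_right (fun h ↦ ?_) (fun h ↦ ?_)
  · exact smul_nonpos_of_nonneg_of_nonpos hs.le (hneg (nonpos_of_mul_nonpos_right h ht))
  · exact smul_nonneg hs.le (hpos (nonneg_of_mul_nonneg_right h ht))

variable {ι X α : Type*} [Zero α] [LinearOrder α]

/-- The cell of `x₀`: the fiber through `x₀` of the sign map `x ↦ (sign (f i x))_{i ∈ S}`. For
the affine functions `a e + r e`, the cells are exactly the faces of the localization at `S`. -/
def signCell (f : ι → X → α) (S : Set ι) (x₀ : X) : Set X :=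
  {x | ∀ i ∈ S, sign (f i x) = sign (f i x₀)}

variable {f : ι → X → α} {S : Set ι} {x x₀ : X} {i : ι}

theorem self_mem_signCell : x₀ ∈ signCell f S x₀ := fun _ _ ↦ rfl

theorem nonpos_iff_of_mem_signCell (hx : x ∈ signCell f S x₀) (hi : i ∈ S) :
    f i x ≤ 0 ↔ f i x₀ ≤ 0 := by
  rw [← sign_nonpos_iff, hx i hi, sign_nonpos_iff]

theorem nonneg_iff_of_mem_signCell (hx : x ∈ signCell f S x₀) (hi : i ∈ S) :
    0 ≤ f i x ↔ 0 ≤ f i x₀ := by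
  rw [← sign_nonneg_iff, hx i hi, sign_nonneg_iff]

theorem signCell_subset_nonpos_iff (hi : i ∈ S) :
    signCell f S x₀ ⊆ {x | f i x ≤ 0} ↔ f i x₀ ≤ 0 :=
  ⟨fun h ↦ h self_mem_signCell, fun h _ hx ↦ (nonpos_iff_of_mem_signCell hx hi).2 h⟩

theorem signCell_subset_nonneg_iff (hi : i ∈ S) :
    signCell f S x₀ ⊆ {x | 0 ≤ f i x} ↔ 0 ≤ f i x₀ :=
  ⟨fun h ↦ h self_mem_signCell, fun h _ hx ↦ (nonneg_iff_of_mem_signCell hx hi).2 h⟩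

end SignCell

section AffineSignCell

variable {ι 𝕜 V : Type*} [Ring 𝕜] [LinearOrder 𝕜] [IsStrictOrderedRing 𝕜]
  [AddCommGroup V] [Module 𝕜 V] {f : ι → V →ᵃ[𝕜] 𝕜} {S : Set ι}

theorem openSegment_subset_signCell {x x₀ : V}
    (hneg : ∀ i ∈ S, f i x₀ ≤ 0 → f i x ≤ 0) (hpos : ∀ i ∈ S, 0 ≤ f i x₀ → 0 ≤ f i x) :
    openSegment 𝕜 x x₀ ⊆ signCell (fun i ↦ f i) S x₀ := fun _ hy i hi ↦
  sign_eq_of_mem_openSegment (hneg i hi) (hpos i hi)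
    (image_openSegment 𝕜 (f i) x x₀ ▸ mem_image_of_mem (f i) hy)

variable [TopologicalSpace 𝕜] [OrderTopology 𝕜] [DenselyOrdered 𝕜]
  [TopologicalSpace V] [ContinuousAdd V] [ContinuousSMul 𝕜 V]

theorem closure_signCell (hf : ∀ i ∈ S, Continuous (f i)) (x₀ : V) :
    closure (signCell (fun i ↦ f i) S x₀) =
      {x | ∀ i ∈ S, (f i x₀ ≤ 0 → f i x ≤ 0) ∧ (0 ≤ f i x₀ → 0 ≤ f i x)} := by
  refine Subset.antisymm (fun x hx i hi ↦ ⟨fun h ↦ ?_, fun h ↦ ?_⟩) (fun x hx ↦ ?_)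
  · exact closure_minimal ((signCell_subset_nonpos_iff hi).2 h)
      (isClosed_le (hf i hi) continuous_const) hx
  · exact closure_minimal ((signCell_subset_nonneg_iff hi).2 h)
      (isClosed_le continuous_const (hf i hi)) hx
  · have segment_subset : openSegment 𝕜 x x₀ ⊆ signCell (fun i ↦ f i) S x₀ :=
      openSegment_subset_signCell (fun i hi ↦ (hx i hi).1) (fun i hi ↦ (hx i hi).2)
    exact closure_mono segment_subset
      (segment_subset_closure_openSegment (left_mem_segment 𝕜 x x₀))

theorem face_subset_closure_iff_general (hf : ∀ i ∈ S, Continuous (f i)) (x₀ : V) (A : Set V) :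
    A ⊆ closure (signCell (fun i ↦ f i) S x₀) ↔
      {i ∈ S | signCell (fun i ↦ f i) S x₀ ⊆ {x | f i x ≤ 0}} ⊆ {i | A ⊆ {x | f i x ≤ 0}} ∧
      {i ∈ S | signCell (fun i ↦ f i) S x₀ ⊆ {x | 0 ≤ f i x}} ⊆ {i | A ⊆ {x | 0 ≤ f i x}} := by
  rw [closure_signCell hf]
  constructor
  · refine fun hA ↦ ⟨fun i hi x hx ↦ ?_, fun i hi x hx ↦ ?_⟩
    · exact (hA hx i hi.1).1 (hi.2 self_mem_signCell)
    · exact (hA hx i hi.1).2 (hi.2 self_mem_signCell)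
  · refine fun ⟨hneg, hpos⟩ x hx i hi ↦ ⟨fun h ↦ ?_, fun h ↦ ?_⟩
    · exact hneg ⟨hi, (signCell_subset_nonpos_iff hi).2 h⟩ hx
    · exact hpos ⟨hi, (signCell_subset_nonneg_iff hi).2 h⟩ hx

end AffineSignCell

/-- Lemma 2.1: a face `R'` of `𝒜` is contained in the closure of a face `R` of `𝒜_S`
iff `S^+(R) ⊆ E^+(R')` and `S^-(R) ⊆ E^-(R')`. -/
theorem face_subset_closure_iff
    (a : E → (M →ₗ[ℝ] ℝ)) (r : E → ℝ)
    (ha : ∀ e, a e ≠ 0) (hspan : Submodule.span ℝ (Set.range a) = ⊤)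
    (S : Set E) (R : Set M) (R' : Set M)
    (hR : IsFace a r S R) (hR' : IsFace a r Set.univ R') :
    R' ⊆ closure R ↔
      posSet a r S R ⊆ posSet a r Set.univ R' ∧
      negSet a r S R ⊆ negSet a r Set.univ R' := by
  obtain ⟨m₀, rfl⟩ := hR
  simpa [posSet, negSet, Hplus, Hminus, signCell] using face_subset_closure_iff_general
    (f := fun e ↦ (a e).toAffineMap + AffineMap.const ℝ M (r e)) (S := S)
    (fun _ _ ↦ AffineMap.continuous_of_finiteDimensional _) m₀ R'

end
end

section
/- Let S ⊆ E and let R be a face of the localization 𝒜_S. Then the dimension of R, i.e. the finrank of its direction space vectorSpan ℝ R, equals d − finrank(span{a_e : e ∈ S^0(R)}); equivalently, the codimension of R in M equals the codimension of the affine subspace ⋂_{e ∈ S^0(R)} H_e. (Equation (2.2) of the paper.) -/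
open Set Submodule

noncomputable section

variable {E : Type*} [Fintype E]
variable {M : Type*} [NormedAddCommGroup M] [NormedSpace ℝ M] [FiniteDimensional ℝ M]

/-- `S^0(R) = S^+(R) ∩ S^-(R)`. -/
def zeroSet (a : E → (M →ₗ[ℝ] ℝ)) (r : E → ℝ) (S : Set E) (R : Set M) : Set E :=
  posSet a r S R ∩ negSet a r S R

/-!
At a point `m₀` of a face `R`, the functions `a e + r e` with `e ∈ S` split into those that vanish
identically on `R`, which are the ones indexed by `S^0(R)`, and those that do not vanish at `m₀`.
The first are constant along every direction of `R`; the second keep their sign near `m₀`. Hence a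
vector `v` is a direction of `R` if and only if every `a e` with `e ∈ S^0(R)` kills it: such a `v`
keeps `m₀ + t • v` in `R` for all small `t`. So the direction space of `R` is the common kernel of
these functionals, whose codimension is the dimension of their span.
-/

section Sign

open Filter Topology

theorem eventually_sign_eq {α : Type*} [Zero α] [TopologicalSpace α] [LinearOrder α]
    [OrderTopology α] {c : α} (hc : c ≠ 0) :
    ∀ᶠ x in 𝓝 c, SignType.sign x = SignType.sign c := by
  have h := (continuousAt_sign_of_ne_zero hc).tendsto
  rwa [nhds_discrete SignType, tendsto_pure] at h

theorem eventually_sign_add_mul_eq {K : Type*} [Field K] [LinearOrder K] [IsStrictOrderedRing K]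
    [TopologicalSpace K] [OrderTopology K] {b c : K} (h : c = 0 → b = 0) :
    ∀ᶠ t in 𝓝 (0 : K), SignType.sign (c + t * b) = SignType.sign c := by
  rcases eq_or_ne c 0 with hc | hc
  · simp only [h hc, mul_zero, add_zero, eventually_true]
  · have hlim : Tendsto (fun t : K => c + t * b) (𝓝 0) (𝓝 c) :=
      Continuous.tendsto' (by fun_prop) 0 c (by simp)
    exact hlim.eventually (eventually_sign_eq hc)

end Sign

theorem mem_dualCoannihilator_span_image {ι k V : Type*} [CommSemiring k] [AddCommMonoid V]
    [Module k V] {a : ι → Module.Dual k V} {T : Set ι} {v : V} :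
    v ∈ (span k (a '' T)).dualCoannihilator ↔ ∀ e ∈ T, a e v = 0 := by
  rw [← SetLike.mem_coe, coe_dualCoannihilator_span, mem_ofPred_eq, forall_mem_image]

theorem finrank_quotient_dualCoannihilator {k V : Type*} [Field k] [AddCommGroup V] [Module k V]
    (W : Submodule k (Module.Dual k V)) [FiniteDimensional k W] :
    Module.finrank k (V ⧸ W.dualCoannihilator) = Module.finrank k W := by
  rw [← Subspace.dual_finrank_eq, (dualQuotEquivDualAnnihilator W.dualCoannihilator).finrank_eq,
    Subspace.dualCoannihilator_dualAnnihilator_eq]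

section Face

open Filter Topology

variable {ι V : Type*} [NormedAddCommGroup V] [NormedSpace ℝ V]
  {a : ι → Module.Dual ℝ V} {r : ι → ℝ} {S : Set ι} {R : Set V}

theorem mem_zeroSet_iff {e : ι} : e ∈ zeroSet a r S R ↔ e ∈ S ∧ ∀ m ∈ R, a e m + r e = 0 := by
  constructor
  · rintro ⟨⟨he, hpos⟩, -, hneg⟩
    exact ⟨he, fun m hm => le_antisymm (hpos hm) (hneg hm)⟩
  · rintro ⟨he, hzero⟩
    exact ⟨⟨he, fun m hm => (hzero m hm).le⟩, he, fun m hm => (hzero m hm).ge⟩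

theorem vectorSpan_le_dualCoannihilator_zeroSet :
    vectorSpan ℝ R ≤ (span ℝ (a '' zeroSet a r S R)).dualCoannihilator := by
  rw [vectorSpan_def, span_le, vsub_subset_iff]
  intro x hx y hy
  refine mem_dualCoannihilator_span_image.2 fun e he => ?_
  obtain ⟨-, hzero⟩ := mem_zeroSet_iff.1 he
  rw [vsub_eq_sub, map_sub]
  linarith [hzero x hx, hzero y hy]

namespace IsFace

theorem nonempty (hR : IsFace a r S R) : R.Nonempty := by
  obtain ⟨m₀, rfl⟩ := hR
  exact ⟨m₀, fun _ _ => rfl⟩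

theorem mem_iff (hR : IsFace a r S R) {m₀ : V} (hm₀ : m₀ ∈ R) {m : V} :
    m ∈ R ↔ ∀ e ∈ S, SignType.sign (a e m + r e) = SignType.sign (a e m₀ + r e) := by
  obtain ⟨m₁, rfl⟩ := hR
  exact forall₂_congr fun e he => by rw [hm₀ e he]

theorem mem_zeroSet_of_eq_zero (hR : IsFace a r S R) {m₀ : V} (hm₀ : m₀ ∈ R) {e : ι} (he : e ∈ S)
    (hzero : a e m₀ + r e = 0) : e ∈ zeroSet a r S R := by
  refine mem_zeroSet_iff.2 ⟨he, fun m hm => sign_eq_zero_iff.1 ?_⟩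
  rw [(hR.mem_iff hm₀).1 hm e he, hzero, sign_zero]

theorem eventually_add_smul_mem (hR : IsFace a r S R) (hS : S.Finite) {m₀ v : V} (hm₀ : m₀ ∈ R)
    (hv : ∀ e ∈ zeroSet a r S R, a e v = 0) : ∀ᶠ t in 𝓝 (0 : ℝ), m₀ + t • v ∈ R := by
  simp only [hR.mem_iff hm₀]
  refine (eventually_all_finite hS).2 fun e he => ?_
  have hline (t : ℝ) : a e (m₀ + t • v) + r e = a e m₀ + r e + t * a e v := by
    rw [map_add, map_smul, smul_eq_mul, add_right_comm]
  simp only [hline]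
  exact eventually_sign_add_mul_eq fun hzero => hv e (hR.mem_zeroSet_of_eq_zero hm₀ he hzero)

theorem vectorSpan_eq_dualCoannihilator (hR : IsFace a r S R) (hS : S.Finite) :
    vectorSpan ℝ R = (span ℝ (a '' zeroSet a r S R)).dualCoannihilator := by
  refine le_antisymm vectorSpan_le_dualCoannihilator_zeroSet fun v hv => ?_
  obtain ⟨m₀, hm₀⟩ := hR.nonempty
  have hnear : ∀ᶠ t in 𝓝[≠] (0 : ℝ), m₀ + t • v ∈ R :=
    (hR.eventually_add_smul_mem hS hm₀ (mem_dualCoannihilator_span_image.1 hv)).filter_mono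
      nhdsWithin_le_nhds
  obtain ⟨t, htR, ht⟩ := (hnear.and self_mem_nhdsWithin).exists
  have htv : t • v ∈ vectorSpan ℝ R := by
    simpa only [vsub_eq_sub, add_sub_cancel_left] using vsub_mem_vectorSpan ℝ htR hm₀
  exact (smul_mem_iff _ ht).1 htv

end IsFace

theorem face_dim_general (hS : S.Finite) (hR : IsFace a r S R) :
    Module.finrank ℝ (V ⧸ vectorSpan ℝ R) =
      Module.finrank ℝ (span ℝ (a '' zeroSet a r S R)) := by
  have hzero : (zeroSet a r S R).Finite := hS.subset fun _ he => he.1.1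
  have : FiniteDimensional ℝ (span ℝ (a '' zeroSet a r S R)) :=
    FiniteDimensional.span_of_finite ℝ (hzero.image a)
  rw [hR.vectorSpan_eq_dualCoannihilator hS, finrank_quotient_dualCoannihilator]

end Face

/-- Equation (2.2): the dimension of a face `R` of `𝒜_S` equals
`d - finrank (span {a_e : e ∈ S^0(R)})`, i.e. the codimension of `R` in `M` is the
codimension of `⋂_{e ∈ S^0(R)} H_e`. -/
theorem face_dim
    (a : E → (M →ₗ[ℝ] ℝ)) (r : E → ℝ)
    (ha : ∀ e, a e ≠ 0) (hspan : Submodule.span ℝ (Set.range a) = ⊤)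
    (S : Set E) (R : Set M) (hR : IsFace a r S R) :
    Module.finrank ℝ (vectorSpan ℝ R) =
      Module.finrank ℝ M -
        Module.finrank ℝ (Submodule.span ℝ (a '' zeroSet a r S R)) := by
  rw [← finrank_quotient_add_finrank (vectorSpan ℝ R), face_dim_general S.toFinite hR]
  exact (Nat.add_sub_cancel_left ..).symm

end
end

section
/- Let S ⊆ E and let R be a face of 𝒜_S. Every nonempty exposed face τ of the cone σ_{S,R} (in the sense of IsExposed ℝ) is of the form σ_{S',R'} for some S' ⊆ S and some face R' of 𝒜_{S'} with R contained in the topological closure of R'. (Classification of faces, from the proof of Proposition 4.1.) -/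
open Set Submodule

noncomputable section

variable {E : Type*} [Fintype E] [DecidableEq E]
variable {M : Type*} [NormedAddCommGroup M] [NormedSpace ℝ M] [FiniteDimensional ℝ M]

/-- The linear map `(E → ℝ) → N` sending the basis vector `δ_e` to `a_e`. -/
def toN (a : E → (M →ₗ[ℝ] ℝ)) : (E → ℝ) →ₗ[ℝ] (M →ₗ[ℝ] ℝ) :=
  Fintype.linearCombination ℝ a

/-- `Λ`, the kernel of `(E → ℝ) → N`. -/
def Lam (a : E → (M →ₗ[ℝ] ℝ)) : Submodule ℝ (E → ℝ) := LinearMap.ker (toN a)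

/-- The antidiagonal embedding `∇ : x ↦ (x, -x)`. -/
def nabla : (E → ℝ) →ₗ[ℝ] (E → ℝ) × (E → ℝ) :=
  LinearMap.prod LinearMap.id (-LinearMap.id)

/-- `∇(Λ)`. -/
def nabLam (a : E → (M →ₗ[ℝ] ℝ)) : Submodule ℝ ((E → ℝ) × (E → ℝ)) :=
  (Lam a).map nabla

/-- The Lawrence cocharacter space `Ñ = ((E → ℝ) × (E → ℝ))/∇(Λ)`. -/
abbrev tildeN (a : E → (M →ₗ[ℝ] ℝ)) : Type _ := ((E → ℝ) × (E → ℝ)) ⧸ nabLam a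

/-- `ρ_e^+`, the image of `(δ_e, 0)` in `Ñ`. -/
def rhoP (a : E → (M →ₗ[ℝ] ℝ)) (e : E) : tildeN a :=
  Submodule.Quotient.mk (Pi.single e 1, 0)

/-- `ρ_e^-`, the image of `(0, δ_e)` in `Ñ`. -/
def rhoM (a : E → (M →ₗ[ℝ] ℝ)) (e : E) : tildeN a :=
  Submodule.Quotient.mk (0, Pi.single e 1)

/-- The cone `σ_{S,R} ⊆ Ñ` generated by `{ρ_e^+ : e ∈ S^+(R)} ∪ {ρ_f^- : f ∈ S^-(R)}`
together with `0`: the set of all nonnegative linear combinations of these generators. -/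
def sigmaCone (a : E → (M →ₗ[ℝ] ℝ)) (r : E → ℝ) (S : Set E) (R : Set M) : Set (tildeN a) :=
  {v | ∃ c d : E → ℝ, (∀ e, 0 ≤ c e) ∧ (∀ e, 0 ≤ d e) ∧
    v = ∑ e, (posSet a r S R).indicator c e • rhoP a e
      + ∑ e, (negSet a r S R).indicator d e • rhoM a e}

/-! A nonempty exposed face of a cone `C` is `C ∩ ker l` for a functional `l ≤ 0` on `C`, hence is
generated by the generators of `C` on which `l` vanishes. The map `e ↦ l ρ_e^- - l ρ_e^+` extends to
a functional on `E → ℝ` that kills `Λ`, so it is `e ↦ a_e u` for some `u : M`. If `x ∈ R` and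
`y = x + t u` with `t > 0` small, then `y` is on the same side of `H_e` as `x` unless `x ∈ H_e`; in
that case both `ρ_e^±` are generators, and if `l` vanishes at only one of them, the sign of `a_e u`
says which. So the face of `σ_{S,R}` is `σ_{S',R'}`, where `S'` is the set of indices of the
generators in `ker l` and `R'` is the face of `𝒜_{S'}` through `y`. A segment from a point of `R` to
`y` stays in `R'` except perhaps at its start, so `R` is in the closure of `R'`. -/

open scoped Topology

section PointedCone

variable {𝕜 ι V : Type*} [Ring 𝕜] [LinearOrder 𝕜] [IsStrictOrderedRing 𝕜]
  [AddCommGroup V] [Module 𝕜 V]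

theorem mem_hull_image_iff [Fintype ι] {v : ι → V} {P : Set ι} {x : V} :
    x ∈ PointedCone.hull 𝕜 (v '' P) ↔
      ∃ c : ι → 𝕜, (∀ i, 0 ≤ c i) ∧ x = ∑ i, P.indicator c i • v i := by
  constructor
  · intro hx
    obtain ⟨w, hw, rfl⟩ := (Finsupp.mem_span_image_iff_linearCombination _).mp hx
    refine ⟨fun i ↦ w i, fun i ↦ (w i).2, ?_⟩
    rw [Finsupp.linearCombination_apply, Finsupp.sum_fintype _ _ fun i ↦ zero_smul _ (v i)]
    refine Finset.sum_congr rfl fun i _ ↦ ?_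
    by_cases hi : i ∈ P
    · rw [indicator_of_mem hi]
      rfl
    · have hwi : w i = 0 := (Finsupp.mem_supported' _ w).mp hw i hi
      simp [hi, hwi]
  · rintro ⟨c, hc, rfl⟩
    refine sum_mem fun i _ ↦ ?_
    by_cases hi : i ∈ P
    · rw [indicator_of_mem hi]
      exact PointedCone.smul_mem _ (hc i) (PointedCone.subset_hull (mem_image_of_mem v hi))
    · simp [hi]

theorem sep_hull_apply_eq_zero {s : Set V} {l : V →ₗ[𝕜] 𝕜} (hl : ∀ x ∈ s, l x ≤ 0) :
    {x ∈ (PointedCone.hull 𝕜 s : Set V) | l x = 0} = PointedCone.hull 𝕜 {x ∈ s | l x = 0} := by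
  apply Subset.antisymm
  · rintro x ⟨hx, hlx⟩
    suffices h : l x ≤ 0 ∧ (l x = 0 → x ∈ PointedCone.hull 𝕜 {x ∈ s | l x = 0}) from h.2 hlx
    clear hlx
    induction hx using Submodule.span_induction with
    | mem x hx => exact ⟨hl x hx, fun h ↦ PointedCone.subset_hull ⟨hx, h⟩⟩
    | zero => simp
    | add x y _ _ hx hy =>
      refine ⟨?_, fun h ↦ ?_⟩
      · simpa using add_nonpos hx.1 hy.1
      · have hsum : l x + l y = 0 := by simpa using h
        exact add_mem (hx.2 (hx.1.antisymm (hsum.ge.trans (add_le_of_nonpos_right hy.1))))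
          (hy.2 (hy.1.antisymm (hsum.ge.trans (add_le_of_nonpos_left hx.1))))
    | smul c x _ hx =>
      have hcx : l (c • x) = c * l x := l.map_smul (c : 𝕜) x
      rw [hcx]
      refine ⟨mul_nonpos_of_nonneg_of_nonpos c.2 hx.1, fun h ↦ ?_⟩
      rcases mul_eq_zero.mp h with hc | hlx
      · obtain rfl : c = 0 := Subtype.ext hc
        simp
      · exact Submodule.smul_mem _ c (hx.2 hlx)
  · refine fun x hx ↦ ⟨Submodule.span_mono (sep_subset s _) hx, ?_⟩
    have hle : PointedCone.hull 𝕜 {x ∈ s | l x = 0} ≤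
        PointedCone.ofSubmodule (LinearMap.ker l) :=
      Submodule.span_le.mpr fun y hy ↦ hy.2
    exact hle hx

theorem exists_nonpos_of_isExposed [TopologicalSpace 𝕜] [TopologicalSpace V]
    {C : PointedCone 𝕜 V} {τ : Set V} (hτ : IsExposed 𝕜 (C : Set V) τ) (hne : τ.Nonempty) :
    ∃ l : StrongDual 𝕜 V, (∀ x ∈ C, l x ≤ 0) ∧ τ = {x ∈ (C : Set V) | l x = 0} := by
  obtain ⟨l, rfl⟩ := hτ hne
  obtain ⟨v, hv, hmax⟩ := hne
  have hlv : l v = 0 := by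
    have hge : 0 ≤ l v := by simpa using hmax 0 C.zero_mem
    have hdouble : l v + l v ≤ l v := by simpa using hmax (v + v) (C.add_mem hv hv)
    exact le_antisymm (by simpa using hdouble) hge
  have hl : ∀ x ∈ C, l x ≤ 0 := fun x hx ↦ hlv ▸ hmax x hx
  refine ⟨l, hl, Set.ext fun x ↦ and_congr_right fun hx ↦ ⟨fun h ↦ ?_, fun h y hy ↦ ?_⟩⟩
  · exact le_antisymm (hl x hx) (hlv ▸ h v hv)
  · exact h ▸ hl y hy

end PointedCone

theorem exists_forall_apply_eq_of_ker_le {𝕜 ι V : Type*} [Field 𝕜] [Fintype ι] [DecidableEq ι]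
    [AddCommGroup V] [Module 𝕜 V] {a : ι → V →ₗ[𝕜] 𝕜} {φ : (ι → 𝕜) →ₗ[𝕜] 𝕜}
    (h : LinearMap.ker (Fintype.linearCombination 𝕜 a) ≤ LinearMap.ker φ) :
    ∃ v : V, ∀ i, a i v = φ (Pi.single i 1) := by
  suffices hφ : (fun i ↦ φ (Pi.single i 1)) ∈ LinearMap.range (LinearMap.pi a) by
    obtain ⟨v, hv⟩ := hφ
    exact ⟨v, congrFun hv⟩
  by_contra hφ
  obtain ⟨f, hfφ, hf⟩ := Submodule.exists_le_ker_of_notMem hφ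
  have apply_eq_sum (g : (ι → 𝕜) →ₗ[𝕜] 𝕜) (w : ι → 𝕜) : g w = ∑ i, w i * g (Pi.single i 1) := by
    conv_lhs => rw [← (Pi.basisFun 𝕜 ι).sum_repr w]
    simp
  have hker : (fun i ↦ f (Pi.single i 1)) ∈ LinearMap.ker (Fintype.linearCombination 𝕜 a) := by
    ext v
    have hv : f (LinearMap.pi a v) = 0 := hf ⟨v, rfl⟩
    simpa [Fintype.linearCombination_apply, apply_eq_sum f (LinearMap.pi a v), mul_comm] using hv
  have hφf : φ (fun i ↦ f (Pi.single i 1)) = 0 := h hker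
  rw [apply_eq_sum] at hfφ hφf
  exact hfφ (by simpa only [mul_comm] using hφf)

section Sign

variable {𝕜 : Type*}

theorem sign_mul_add_mul [Ring 𝕜] [LinearOrder 𝕜] [IsStrictOrderedRing 𝕜] {s t b c : 𝕜}
    (hs : 0 ≤ s) (ht : 0 < t) (h : b = 0 ∨ SignType.sign b = SignType.sign c) :
    SignType.sign (s * b + t * c) = SignType.sign c := by
  rcases h with rfl | h
  · simp [sign_mul, ht]
  rcases lt_trichotomy c 0 with hc | rfl | hc
  · rw [sign_neg hc, sign_eq_neg_one_iff] at h
    rw [sign_neg hc, sign_neg (add_neg_of_nonpos_of_neg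
      (mul_nonpos_of_nonneg_of_nonpos hs h.le) (mul_neg_of_pos_of_neg ht hc))]
  · simp_all
  · rw [sign_pos hc, sign_eq_one_iff] at h
    rw [sign_pos hc, sign_pos (add_pos_of_nonneg_of_pos (mul_nonneg hs h.le) (mul_pos ht hc))]

theorem eventually_sign_add_mul [Field 𝕜] [LinearOrder 𝕜] [IsStrictOrderedRing 𝕜]
    [TopologicalSpace 𝕜] [OrderTopology 𝕜] (b c : 𝕜) :
    ∀ᶠ t in 𝓝[>] (0 : 𝕜), SignType.sign (b + t * c) =
      if b = 0 then SignType.sign c else SignType.sign b := by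
  split_ifs with hb
  · filter_upwards [self_mem_nhdsWithin] with t (ht : 0 < t)
    simp [hb, sign_mul, ht]
  · have hlim : Filter.Tendsto (fun t ↦ b + t * c) (𝓝[>] 0) (𝓝 b) := by
      have hcont : Continuous fun t ↦ b + t * c := by fun_prop
      simpa using (hcont.tendsto 0).mono_left nhdsWithin_le_nhds
    have hsign := (continuousAt_sign_of_ne_zero hb).tendsto.comp hlim
    simpa using hsign

variable [AddCommGroup 𝕜] [LinearOrder 𝕜] [IsOrderedAddMonoid 𝕜]

theorem nonpos_and_iff_of_sign_eq_ite {b c p q : 𝕜}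
    (hc : SignType.sign c = if b = 0 then SignType.sign (q - p) else SignType.sign b)
    (hp : b ≤ 0 → p ≤ 0) (hq : 0 ≤ b → q ≤ 0) :
    ((b ≤ 0 ∧ p = 0 ∨ 0 ≤ b ∧ q = 0) ∧ c ≤ 0) ↔ b ≤ 0 ∧ p = 0 := by
  rw [← sign_nonpos_iff (a := c), hc]
  rcases lt_trichotomy b 0 with hb | rfl | hb
  · simp [hb.ne, hb.le, hb.not_ge]
  · simp only [le_refl, true_and, if_true, sign_nonpos_iff, sub_nonpos]
    constructor
    · rintro ⟨hp0 | hq0, hqp⟩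
      exacts [hp0, (hp le_rfl).antisymm (hq0.symm.trans_le hqp)]
    · exact fun hp0 ↦ ⟨.inl hp0, (hq le_rfl).trans_eq hp0.symm⟩
  · simp [hb.ne', hb.not_ge]

theorem nonneg_and_iff_of_sign_eq_ite {b c p q : 𝕜}
    (hc : SignType.sign c = if b = 0 then SignType.sign (q - p) else SignType.sign b)
    (hp : b ≤ 0 → p ≤ 0) (hq : 0 ≤ b → q ≤ 0) :
    ((b ≤ 0 ∧ p = 0 ∨ 0 ≤ b ∧ q = 0) ∧ 0 ≤ c) ↔ 0 ≤ b ∧ q = 0 := by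
  have hneg : SignType.sign (-c) =
      if -b = 0 then SignType.sign (p - q) else SignType.sign (-b) := by
    rw [← neg_sub q p, Left.sign_neg, Left.sign_neg, Left.sign_neg, hc]
    simp only [neg_eq_zero]
    split_ifs <;> rfl
  simpa only [neg_nonpos, neg_nonneg, or_comm] using
    nonpos_and_iff_of_sign_eq_ite hneg (hq ∘ neg_nonpos.mp) (hp ∘ neg_nonneg.mp)

end Sign

section Face

variable {𝕜 ι V : Type*} [Field 𝕜] [LinearOrder 𝕜] [AddCommGroup V] [Module 𝕜 V]

/-- The face through `x` of the localization at `S` of the arrangement `{a_i + r_i = 0}`: the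
fiber through `x` of the sign map. -/
def faceThrough (a : ι → V →ₗ[𝕜] 𝕜) (r : ι → 𝕜) (S : Set ι) (x : V) : Set V :=
  {y | ∀ i ∈ S, SignType.sign (a i y + r i) = SignType.sign (a i x + r i)}

variable [IsStrictOrderedRing 𝕜] [TopologicalSpace 𝕜] [OrderTopology 𝕜]

theorem faceThrough_subset_closure [TopologicalSpace V] [ContinuousAdd V] [ContinuousSMul 𝕜 V]
    {a : ι → V →ₗ[𝕜] 𝕜} {r : ι → 𝕜} {S T : Set ι} {x y : V} (hTS : T ⊆ S)
    (h : ∀ i ∈ T, a i x + r i = 0 ∨ SignType.sign (a i x + r i) = SignType.sign (a i y + r i)) :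
    faceThrough a r S x ⊆ closure (faceThrough a r T y) := by
  intro p hp
  have hsegment : openSegment 𝕜 p y ⊆ faceThrough a r T y := by
    rintro _ ⟨s, t, hs, ht, hst, rfl⟩ i hi
    have hpx := hp i (hTS hi)
    have hpy : a i p + r i = 0 ∨ SignType.sign (a i p + r i) = SignType.sign (a i y + r i) := by
      rw [← sign_eq_zero_iff, hpx, sign_eq_zero_iff]
      exact h i hi
    rw [← sign_mul_add_mul hs.le ht hpy]
    congr 1
    simp only [map_add, map_smul, smul_eq_mul]
    linear_combination (-r i) * hst
  exact closure_mono hsegment (segment_subset_closure_openSegment (left_mem_segment 𝕜 p y))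

theorem exists_sign_eq_ite [Finite ι] (a : ι → V →ₗ[𝕜] 𝕜) (r : ι → 𝕜) (x u : V) :
    ∃ y, ∀ i, SignType.sign (a i y + r i) =
      if a i x + r i = 0 then SignType.sign (a i u) else SignType.sign (a i x + r i) := by
  obtain ⟨t, ht⟩ := (Filter.eventually_all.mpr fun i ↦
    eventually_sign_add_mul (a i x + r i) (a i u)).exists
  refine ⟨x + t • u, fun i ↦ ?_⟩
  rw [← ht i, (a i).map_add, (a i).map_smul, smul_eq_mul, add_right_comm]

end Face

section Indices

variable {ι V : Type*} [NormedAddCommGroup V] [NormedSpace ℝ V]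
  {a : ι → V →ₗ[ℝ] ℝ} {r : ι → ℝ} {S : Set ι} {x : V} {i : ι}

theorem mem_posSet_faceThrough :
    i ∈ posSet a r S (faceThrough a r S x) ↔ i ∈ S ∧ a i x + r i ≤ 0 := by
  refine and_congr_right fun hi ↦ ⟨fun h ↦ h fun _ _ ↦ rfl, fun h y hy ↦ ?_⟩
  rwa [← sign_nonpos_iff, ← hy i hi, sign_nonpos_iff] at h

theorem mem_negSet_faceThrough :
    i ∈ negSet a r S (faceThrough a r S x) ↔ i ∈ S ∧ 0 ≤ a i x + r i := by
  refine and_congr_right fun hi ↦ ⟨fun h ↦ h fun _ _ ↦ rfl, fun h y hy ↦ ?_⟩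
  rwa [← sign_nonneg_iff, ← hy i hi, sign_nonneg_iff] at h

/-- The index set `S'` of the face of `σ_{S,R}` cut out by a functional with value `p i` at
`ρ_i^+` and `q i` at `ρ_i^-`: the indices of the generators at which the functional vanishes. -/
def vanishingSet (a : ι → V →ₗ[ℝ] ℝ) (r : ι → ℝ) (S : Set ι) (R : Set V) (p q : ι → ℝ) : Set ι :=
  {i ∈ posSet a r S R | p i = 0} ∪ {i ∈ negSet a r S R | q i = 0}

theorem vanishingSet_subset {R : Set V} {p q : ι → ℝ} : vanishingSet a r S R p q ⊆ S :=
  union_subset (fun _ hi ↦ hi.1.1) fun _ hi ↦ hi.1.1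

variable {y : V} {p q : ι → ℝ}

theorem posSet_vanishingSet
    (hp : ∀ i ∈ posSet a r S (faceThrough a r S x), p i ≤ 0)
    (hq : ∀ i ∈ negSet a r S (faceThrough a r S x), q i ≤ 0)
    (hy : ∀ i, SignType.sign (a i y + r i) =
      if a i x + r i = 0 then SignType.sign (q i - p i) else SignType.sign (a i x + r i)) :
    posSet a r (vanishingSet a r S (faceThrough a r S x) p q)
        (faceThrough a r (vanishingSet a r S (faceThrough a r S x) p q) y) =
      {i ∈ posSet a r S (faceThrough a r S x) | p i = 0} := by
  ext i
  by_cases hi : i ∈ S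
  · simpa [vanishingSet, mem_posSet_faceThrough, mem_negSet_faceThrough, hi] using
      nonpos_and_iff_of_sign_eq_ite (hy i) (fun h ↦ hp i (mem_posSet_faceThrough.mpr ⟨hi, h⟩))
        (fun h ↦ hq i (mem_negSet_faceThrough.mpr ⟨hi, h⟩))
  · simp [vanishingSet, mem_posSet_faceThrough, mem_negSet_faceThrough, hi]

theorem negSet_vanishingSet
    (hp : ∀ i ∈ posSet a r S (faceThrough a r S x), p i ≤ 0)
    (hq : ∀ i ∈ negSet a r S (faceThrough a r S x), q i ≤ 0)
    (hy : ∀ i, SignType.sign (a i y + r i) =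
      if a i x + r i = 0 then SignType.sign (q i - p i) else SignType.sign (a i x + r i)) :
    negSet a r (vanishingSet a r S (faceThrough a r S x) p q)
        (faceThrough a r (vanishingSet a r S (faceThrough a r S x) p q) y) =
      {i ∈ negSet a r S (faceThrough a r S x) | q i = 0} := by
  ext i
  by_cases hi : i ∈ S
  · simpa [vanishingSet, mem_posSet_faceThrough, mem_negSet_faceThrough, hi] using
      nonneg_and_iff_of_sign_eq_ite (hy i) (fun h ↦ hp i (mem_posSet_faceThrough.mpr ⟨hi, h⟩))
        (fun h ↦ hq i (mem_negSet_faceThrough.mpr ⟨hi, h⟩))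
  · simp [vanishingSet, mem_posSet_faceThrough, mem_negSet_faceThrough, hi]

end Indices

section Lawrence

variable {ι V : Type*} [Fintype ι] [DecidableEq ι] [NormedAddCommGroup V] [NormedSpace ℝ V]
  {a : ι → V →ₗ[ℝ] ℝ} {r : ι → ℝ} {S : Set ι}

theorem sigmaCone_eq_hull (R : Set V) :
    sigmaCone a r S R =
      PointedCone.hull ℝ (rhoP a '' posSet a r S R ∪ rhoM a '' negSet a r S R) := by
  ext v
  simp only [PointedCone.hull, span_union, SetLike.mem_coe, mem_sup, mem_hull_image_iff]
  constructor
  · rintro ⟨c, d, hc, hd, rfl⟩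
    exact ⟨_, ⟨c, hc, rfl⟩, _, ⟨d, hd, rfl⟩, rfl⟩
  · rintro ⟨_, ⟨c, hc, rfl⟩, _, ⟨d, hd, rfl⟩, rfl⟩
    exact ⟨c, d, hc, hd, rfl⟩

theorem exists_isExposed_sigmaCone_eq_hull {R : Set V} {τ : Set (tildeN a)}
    (hτ : IsExposed ℝ (sigmaCone a r S R) τ) (hne : τ.Nonempty) :
    ∃ l : tildeN a →ₗ[ℝ] ℝ, (∀ i ∈ posSet a r S R, l (rhoP a i) ≤ 0) ∧
      (∀ i ∈ negSet a r S R, l (rhoM a i) ≤ 0) ∧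
      τ = PointedCone.hull ℝ (rhoP a '' {i ∈ posSet a r S R | l (rhoP a i) = 0} ∪
        rhoM a '' {i ∈ negSet a r S R | l (rhoM a i) = 0}) := by
  rw [sigmaCone_eq_hull] at hτ
  obtain ⟨l, hl, hτl⟩ := exists_nonpos_of_isExposed hτ hne
  have hgen := fun v hv ↦ hl v (PointedCone.subset_hull hv)
  have hvanish : {v ∈ rhoP a '' posSet a r S R ∪ rhoM a '' negSet a r S R | l v = 0} =
      rhoP a '' {i ∈ posSet a r S R | l (rhoP a i) = 0} ∪
        rhoM a '' {i ∈ negSet a r S R | l (rhoM a i) = 0} :=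
    (union_inter_distrib_right _ _ {v | l v = 0}).trans
      (congrArg₂ _ (image_inter_preimage _ _ _).symm (image_inter_preimage _ _ _).symm)
  refine ⟨l, fun i hi ↦ hgen _ (.inl (mem_image_of_mem _ hi)),
    fun i hi ↦ hgen _ (.inr (mem_image_of_mem _ hi)), hτl.trans ?_⟩
  exact (sep_hull_apply_eq_zero (l := l.toLinearMap) hgen).trans (hvanish ▸ rfl)

theorem exists_apply_eq_rhoM_sub_rhoP (l : tildeN a →ₗ[ℝ] ℝ) :
    ∃ u : V, ∀ i, a i u = l (rhoM a i) - l (rhoP a i) := by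
  have hker : LinearMap.ker (Fintype.linearCombination ℝ a) ≤
      LinearMap.ker (-(l ∘ₗ (nabLam a).mkQ ∘ₗ nabla)) := by
    intro w hw
    have hnabla : (nabLam a).mkQ (nabla w) = 0 :=
      (Submodule.Quotient.mk_eq_zero _).mpr ⟨w, hw, rfl⟩
    simp [hnabla]
  obtain ⟨u, hu⟩ := exists_forall_apply_eq_of_ker_le hker
  refine ⟨u, fun i ↦ (hu i).trans ?_⟩
  have hrho : (nabLam a).mkQ (nabla (Pi.single i 1)) = rhoP a i - rhoM a i := by
    simp [rhoP, rhoM, nabla, ← Submodule.Quotient.mk_sub]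
  rw [LinearMap.neg_apply, LinearMap.comp_apply, LinearMap.comp_apply, hrho, map_sub, neg_sub]

theorem exposed_face_of_sigmaCone_general {R : Set V} (hR : IsFace a r S R)
    {τ : Set (tildeN a)} (hne : τ.Nonempty) (hτ : IsExposed ℝ (sigmaCone a r S R) τ) :
    ∃ (S' : Set ι) (R' : Set V), S' ⊆ S ∧ IsFace a r S' R' ∧ R ⊆ closure R' ∧
      τ = sigmaCone a r S' R' := by
  obtain ⟨x, rfl : R = faceThrough a r S x⟩ := hR
  obtain ⟨l, hp, hq, rfl⟩ := exists_isExposed_sigmaCone_eq_hull hτ hne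
  obtain ⟨u, hu⟩ := exists_apply_eq_rhoM_sub_rhoP l
  obtain ⟨y, hy⟩ := exists_sign_eq_ite a r x u
  let S' := vanishingSet a r S (faceThrough a r S x) (fun i ↦ l (rhoP a i)) fun i ↦ l (rhoM a i)
  refine ⟨S', faceThrough a r S' y, vanishingSet_subset, ⟨y, rfl⟩, ?_, ?_⟩
  · refine faceThrough_subset_closure vanishingSet_subset fun i _ ↦ ?_
    rw [hy i]
    split_ifs with h
    exacts [.inl h, .inr rfl]
  · simp only [hu] at hy
    rw [sigmaCone_eq_hull, posSet_vanishingSet hp hq hy, negSet_vanishingSet hp hq hy]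

end Lawrence

/-- Classification of faces (from the proof of Proposition 4.1): every nonempty exposed face
of `σ_{S,R}` is of the form `σ_{S',R'}` for some `S' ⊆ S` and face `R'` of `𝒜_{S'}` whose
closure contains `R`. -/
theorem exposed_face_of_sigmaCone
    (a : E → (M →ₗ[ℝ] ℝ)) (r : E → ℝ)
    (ha : ∀ e, a e ≠ 0) (hspan : Submodule.span ℝ (Set.range a) = ⊤)
    (S : Set E) (R : Set M) (hR : IsFace a r S R)
    (τ : Set (tildeN a)) (hτne : τ.Nonempty)
    (hτ : IsExposed ℝ (sigmaCone a r S R) τ) :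
    ∃ (S' : Set E) (R' : Set M), S' ⊆ S ∧ IsFace a r S' R' ∧ R ⊆ closure R' ∧
      τ = sigmaCone a r S' R' := by
  exact exposed_face_of_sigmaCone_general hR hτne hτ

end
end

section
/- Let S ⊆ E and let R be a face of 𝒜_S. Then the dimension of the linear span of the cone σ_{S,R} in Ñ equals |S| + finrank(span{a_e : e ∈ S^0(R)}), i.e. dim σ_{S,R} = |S| + codim R. (Dimension formula of Proposition 4.1.) -/
open Set Submodule

noncomputable section

variable {E : Type*} [Fintype E] [DecidableEq E]
variable {M : Type*} [NormedAddCommGroup M] [NormedSpace ℝ M] [FiniteDimensional ℝ M]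

/-!
Set `P = S⁺(R)` and `Q = S⁻(R)`, so that `P ∪ Q = S` because every hyperplane `H_e`, `e ∈ S`, has
`R` on one of its closed sides, and `P ∩ Q = S⁰(R)`. The span of the cone is the image in `Ñ` of
`ℝ^P × ℝ^Q`, which meets `∇(Λ)` in a copy of `ℝ^(P ∩ Q) ∩ Λ`. Hence its dimension is
`|P| + |Q| - dim (ℝ^(P ∩ Q) ∩ Λ) = |P ∪ Q| + (|P ∩ Q| - dim (ℝ^(P ∩ Q) ∩ Λ))`, and by rank-nullity
the last bracket is the dimension of the image `span {a_e : e ∈ P ∩ Q}` of `ℝ^(P ∩ Q)` in `N`.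
-/

section Spans

theorem sum_indicator_smul_mem_span_image {ι R V : Type*} [Semiring R] [AddCommMonoid V]
    [Module R V] (v : ι → V) (P : Set ι) (c : ι → R) (s : Finset ι) :
    ∑ i ∈ s, P.indicator c i • v i ∈ Submodule.span R (v '' P) := by
  refine Submodule.sum_mem _ fun i _ ↦ ?_
  by_cases hi : i ∈ P
  · exact Submodule.smul_mem _ _ (Submodule.subset_span (Set.mem_image_of_mem v hi))
  · simp [hi]

theorem sum_indicator_single_smul {ι R V : Type*} [Fintype ι] [DecidableEq ι] [Semiring R]
    [AddCommMonoid V] [Module R V] (v : ι → V) {P : Set ι} {j : ι} (hj : j ∈ P) :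
    ∑ i, P.indicator (Pi.single j (1 : R)) i • v i = v j := by
  have h_support : Function.support (Pi.single j (1 : R)) ⊆ P :=
    Pi.support_single_subset.trans (Set.singleton_subset_iff.2 hj)
  simp [Set.indicator_eq_self.2 h_support, Pi.single_apply]

variable {ι R : Type*} [Finite ι] [Semiring R]

theorem spanSubset_union (P Q : Set ι) :
    Pi.spanSubset R (P ∪ Q) = Pi.spanSubset R P ⊔ Pi.spanSubset R Q := by
  simp only [Pi.spanSubset, Set.image_union, Submodule.span_union]

theorem spanSubset_inter (P Q : Set ι) :
    Pi.spanSubset R (P ∩ Q) = Pi.spanSubset R P ⊓ Pi.spanSubset R Q := by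
  ext x
  simp only [Submodule.mem_inf, Pi.mem_spanSubset_iff, Set.mem_inter_iff, not_and_or, or_imp,
    forall_and]

end Spans

section Antidiagonal

variable {R V : Type*} [Ring R] [AddCommGroup V] [Module R V]

variable (R V) in
/-- The antidiagonal embedding `x ↦ (x, -x)` of a module into its square; the map `nabla` is the
case `V = E → ℝ`. -/
def antidiag : V →ₗ[R] V × V :=
  LinearMap.prod LinearMap.id (-LinearMap.id)

theorem antidiag_injective : Function.Injective (antidiag R V) :=
  fun _ _ h ↦ congrArg Prod.fst h

theorem prod_inf_map_antidiag (P Q L : Submodule R V) :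
    P.prod Q ⊓ L.map (antidiag R V) = (P ⊓ Q ⊓ L).map (antidiag R V) := by
  rw [inf_comm, Submodule.map_inf_eq_map_inf_comap, antidiag, LinearMap.comap_prod_prod,
    Submodule.comap_neg, Submodule.comap_id, Submodule.comap_id, inf_comm]

end Antidiagonal

section Finrank

theorem finrank_submodule_prod {R V W : Type*} [Semiring R] [StrongRankCondition R]
    [AddCommMonoid V] [Module R V] [AddCommMonoid W] [Module R W]
    (P : Submodule R V) (Q : Submodule R W)
    [Module.Free R P] [Module.Finite R P] [Module.Free R Q] [Module.Finite R Q] :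
    Module.finrank R (P.prod Q) = Module.finrank R P + Module.finrank R Q := by
  have h_inj : Function.Injective (P.subtype.prodMap Q.subtype) :=
    P.subtype_injective.prodMap Q.subtype_injective
  rw [← Module.finrank_prod, ← LinearMap.finrank_range_of_inj h_inj, LinearMap.range_prodMap,
    Submodule.range_subtype, Submodule.range_subtype]

variable {K V W : Type*} [DivisionRing K] [AddCommGroup V] [Module K V]
  [AddCommGroup W] [Module K W]

theorem finrank_map_add_finrank_inf_ker (f : V →ₗ[K] W) (P : Submodule K V)
    [FiniteDimensional K P] :
    Module.finrank K (P.map f) + Module.finrank K ↥(P ⊓ LinearMap.ker f) =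
      Module.finrank K P := by
  rw [← LinearMap.finrank_range_add_finrank_ker (f.domRestrict P), LinearMap.range_domRestrict,
    LinearMap.ker_domRestrict, ← Submodule.map_comap_subtype, Submodule.finrank_map_subtype_eq]

theorem finrank_map_mkQ_map_antidiag_ker (f : V →ₗ[K] W) (P Q : Submodule K V)
    [FiniteDimensional K P] [FiniteDimensional K Q] :
    Module.finrank K ((P.prod Q).map ((LinearMap.ker f).map (antidiag K V)).mkQ) =
      Module.finrank K ↥(P ⊔ Q) + Module.finrank K ((P ⊓ Q).map f) := by
  set L := LinearMap.ker f
  have : FiniteDimensional K (P.prod Q) :=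
    .of_fg (.prod (Module.Finite.iff_fg.1 inferInstance) (Module.Finite.iff_fg.1 inferInstance))
  have h_quot : Module.finrank K ((P.prod Q).map (L.map (antidiag K V)).mkQ) +
      Module.finrank K ↥(P ⊓ Q ⊓ L) = Module.finrank K P + Module.finrank K Q := by
    rw [← finrank_submodule_prod P Q, ← finrank_map_add_finrank_inf_ker (L.map (antidiag K V)).mkQ,
      Submodule.ker_mkQ, prod_inf_map_antidiag,
      (Submodule.equivMapOfInjective _ antidiag_injective (P ⊓ Q ⊓ L)).finrank_eq]
  have h_map : Module.finrank K ((P ⊓ Q).map f) + Module.finrank K ↥(P ⊓ Q ⊓ L) =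
      Module.finrank K ↥(P ⊓ Q) := finrank_map_add_finrank_inf_ker f (P ⊓ Q)
  have h_sup := Submodule.finrank_sup_add_finrank_inf_eq P Q
  omega

end Finrank

section Faces

omit [Fintype E] [DecidableEq E] [FiniteDimensional ℝ M]

variable {a : E → (M →ₗ[ℝ] ℝ)} {r : E → ℝ} {S : Set E} {R : Set M}

theorem IsFace.subset_Hplus_or_subset_Hminus (hR : IsFace a r S R) {e : E} (he : e ∈ S) :
    R ⊆ Hplus a r e ∨ R ⊆ Hminus a r e := by
  obtain ⟨m₀, rfl⟩ := hR
  refine (le_total (a e m₀ + r e) 0).imp (fun h m hm ↦ ?_) (fun h m hm ↦ ?_)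
  · exact sign_nonpos_iff.1 ((hm e he).trans_le (sign_nonpos_iff.2 h))
  · exact sign_nonneg_iff.1 ((sign_nonneg_iff.2 h).trans_eq (hm e he).symm)

theorem posSet_union_negSet (hR : ∀ e ∈ S, R ⊆ Hplus a r e ∨ R ⊆ Hminus a r e) :
    posSet a r S R ∪ negSet a r S R = S := by
  rw [posSet, negSet, ← Set.sep_or]
  exact Set.sep_eq_self_iff_mem_true.2 hR

end Faces

section LawrenceSpace

omit [FiniteDimensional ℝ M]

variable (a : E → (M →ₗ[ℝ] ℝ))

omit [DecidableEq E] in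
theorem map_toN_spanSubset (Z : Set E) :
    (Pi.spanSubset ℝ Z).map (toN a) = Submodule.span ℝ (a '' Z) := by
  classical
  simp only [Pi.spanSubset, Submodule.map_span, Set.image_image, Pi.basisFun_apply, toN,
    Fintype.linearCombination_apply_single, one_smul]

theorem span_rhoP_union_rhoM (P Q : Set E) :
    Submodule.span ℝ (rhoP a '' P ∪ rhoM a '' Q) =
      ((Pi.spanSubset ℝ P).prod (Pi.spanSubset ℝ Q)).map (nabLam a).mkQ := by
  simp only [Pi.spanSubset, ← LinearMap.span_inl_union_inr, Submodule.map_span, Set.image_union,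
    Set.image_image, Pi.basisFun_apply]
  rfl

theorem finrank_span_rhoP_union_rhoM (P Q : Set E) :
    Module.finrank ℝ (Submodule.span ℝ (rhoP a '' P ∪ rhoM a '' Q)) =
      (P ∪ Q).ncard + Module.finrank ℝ (Submodule.span ℝ (a '' (P ∩ Q))) := by
  rw [span_rhoP_union_rhoM, ← map_toN_spanSubset, ← Pi.dim_spanSubset (R := ℝ), spanSubset_union,
    spanSubset_inter]
  exact finrank_map_mkQ_map_antidiag_ker (toN a) _ _

end LawrenceSpace

section Cone

omit [FiniteDimensional ℝ M]

variable {a : E → (M →ₗ[ℝ] ℝ)} {r : E → ℝ} {S : Set E} {R : Set M}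

theorem rhoP_mem_sigmaCone {e : E} (he : e ∈ posSet a r S R) : rhoP a e ∈ sigmaCone a r S R := by
  have h_nonneg : (0 : E → ℝ) ≤ Pi.single e 1 := Pi.single_nonneg.2 zero_le_one
  refine ⟨Pi.single e 1, 0, h_nonneg, fun _ ↦ le_rfl, ?_⟩
  simp [sum_indicator_single_smul _ he]

theorem rhoM_mem_sigmaCone {e : E} (he : e ∈ negSet a r S R) : rhoM a e ∈ sigmaCone a r S R := by
  have h_nonneg : (0 : E → ℝ) ≤ Pi.single e 1 := Pi.single_nonneg.2 zero_le_one
  refine ⟨0, Pi.single e 1, fun _ ↦ le_rfl, h_nonneg, ?_⟩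
  simp [sum_indicator_single_smul _ he]

variable (a r S R) in
theorem span_sigmaCone :
    Submodule.span ℝ (sigmaCone a r S R) =
      Submodule.span ℝ (rhoP a '' posSet a r S R ∪ rhoM a '' negSet a r S R) := by
  apply le_antisymm <;> rw [Submodule.span_le]
  · rintro _ ⟨c, d, -, -, rfl⟩
    rw [Submodule.span_union]
    exact Submodule.add_mem_sup (sum_indicator_smul_mem_span_image _ _ c _)
      (sum_indicator_smul_mem_span_image _ _ d _)
  · rintro _ (⟨e, he, rfl⟩ | ⟨e, he, rfl⟩)
    · exact Submodule.subset_span (rhoP_mem_sigmaCone he)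
    · exact Submodule.subset_span (rhoM_mem_sigmaCone he)

theorem sigmaCone_dim_general (hR : ∀ e ∈ S, R ⊆ Hplus a r e ∨ R ⊆ Hminus a r e) :
    Module.finrank ℝ (Submodule.span ℝ (sigmaCone a r S R)) =
      S.ncard + Module.finrank ℝ (Submodule.span ℝ (a '' zeroSet a r S R)) := by
  rw [span_sigmaCone, finrank_span_rhoP_union_rhoM, posSet_union_negSet hR, zeroSet]

end Cone

/-- Dimension formula of Proposition 4.1: `dim σ_{S,R} = |S| + codim R`, where
`codim R = finrank (span {a_e : e ∈ S^0(R)})`. -/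
theorem sigmaCone_dim
    (a : E → (M →ₗ[ℝ] ℝ)) (r : E → ℝ)
    (ha : ∀ e, a e ≠ 0) (hspan : Submodule.span ℝ (Set.range a) = ⊤)
    (S : Set E) (R : Set M) (hR : IsFace a r S R) :
    Module.finrank ℝ (Submodule.span ℝ (sigmaCone a r S R)) =
      S.ncard + Module.finrank ℝ (Submodule.span ℝ (a '' zeroSet a r S R)) :=
  sigmaCone_dim_general fun _ he ↦ hR.subset_Hplus_or_subset_Hminus he

end
end

section
/- Let S ⊆ E and let Q ⊆ S be such that the family (a_q)_{q ∈ Q} is a basis of the subspace span{a_e : e ∈ S} of N. Then the family consisting of ρ_q^+ for q ∈ Q together with ρ_e^- for e ∈ S is a basis of the subspace V₂ = span{ρ_e^+, ρ_e^- : e ∈ S} of Ñ; in particular dim V₂ = |Q| + |S|. (Basis claim (4.1) from the proof of Proposition 4.1.) -/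
/-!
Write `a_e = f δ_e` with `f = toN a` and `δ_e` the standard basis vectors. The map
`(x, y) ↦ (f x, x + y)` has kernel the antidiagonal copy of `ker f`, so it embeds `Ñ` into
`N × ℝ^E`, sending `ρ_e^+` to `(a_e, δ_e)` and `ρ_e^-` to `(0, δ_e)`. There both spans become
`span {a_e : e ∈ S} × span {δ_e : e ∈ S}`, and independence is read off from the two projections.
-/

open Set Submodule

noncomputable section

variable {E : Type*} [Fintype E] [DecidableEq E]
variable {M : Type*} [NormedAddCommGroup M] [NormedSpace ℝ M] [FiniteDimensional ℝ M]

section LinearAlgebra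

variable {ι κ K V W : Type*} [Ring K] [AddCommGroup V] [Module K V] [AddCommGroup W] [Module K W]

lemma linearIndependent_sumElim_of_map_eq_zero {f : V →ₗ[K] W} {v : ι → V} {w : κ → V}
    (hv : LinearIndependent K (f ∘ v)) (hw : LinearIndependent K w) (hfw : ∀ k, f (w k) = 0) :
    LinearIndependent K (Sum.elim v w) := by
  have hw_ker : span K (range w) ≤ LinearMap.ker f := span_le.2 (range_subset_iff.2 hfw)
  exact (hv.of_comp f).sum_type hw ((range_ker_disjoint hv).mono_right hw_ker)

lemma span_image_prodMk_union_image_zero_prodMk (v : ι → V) (w : ι → W) {s t : Set ι}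
    (hst : s ⊆ t) :
    span K ((fun i ↦ (v i, w i)) '' s ∪ (fun i ↦ ((0 : V), w i)) '' t) =
      (span K (v '' s)).prod (span K (w '' t)) := by
  apply le_antisymm
  · rw [span_le, union_subset_iff, image_subset_iff, image_subset_iff]
    exact ⟨fun i hi ↦ ⟨subset_span (mem_image_of_mem v hi),
        subset_span (mem_image_of_mem w (hst hi))⟩,
      fun i hi ↦ ⟨zero_mem _, subset_span (mem_image_of_mem w hi)⟩⟩
  · have snd_mem : ∀ i ∈ t, ((0 : V), w i) ∈
        span K ((fun i ↦ (v i, w i)) '' s ∪ (fun i ↦ ((0 : V), w i)) '' t) :=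
      fun i hi ↦ subset_span (Or.inr (mem_image_of_mem _ hi))
    rw [← LinearMap.span_inl_union_inr, span_le, union_subset_iff, image_image, image_image,
      image_subset_iff, image_subset_iff]
    refine ⟨fun i hi ↦ ?_, snd_mem⟩
    have pair_mem : (v i, w i) ∈
        span K ((fun i ↦ (v i, w i)) '' s ∪ (fun i ↦ ((0 : V), w i)) '' t) :=
      subset_span (Or.inl (mem_image_of_mem _ hi))
    simpa using sub_mem pair_mem (snd_mem i (hst hi))

end LinearAlgebra

section Lawrence

variable {ι K V X : Type*} [Ring K] [AddCommGroup V] [Module K V] [AddCommGroup X] [Module K X]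

/-- The Lawrence quotient `(X × X) / {(x, -x) : x ∈ ker f}` of a linear map `f : X → V`. For
`f = toN a` this is definitionally `tildeN a`. -/
abbrev LawrenceQuotient (f : X →ₗ[K] V) : Type _ :=
  (X × X) ⧸ (LinearMap.ker f).map (LinearMap.prod LinearMap.id (-LinearMap.id))

namespace LawrenceQuotient

/-- The map induced by `x ↦ (x, 0)`; it sends `δ_e` to `ρ_e^+`. -/
def pos (f : X →ₗ[K] V) : X →ₗ[K] LawrenceQuotient f := mkQ _ ∘ₗ LinearMap.inl K X X

/-- The map induced by `y ↦ (0, y)`; it sends `δ_e` to `ρ_e^-`. -/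
def neg (f : X →ₗ[K] V) : X →ₗ[K] LawrenceQuotient f := mkQ _ ∘ₗ LinearMap.inr K X X

lemma map_antidiagonal_ker_eq_ker_prod (f : X →ₗ[K] V) :
    (LinearMap.ker f).map (LinearMap.prod LinearMap.id (-LinearMap.id)) =
      LinearMap.ker
        ((f ∘ₗ LinearMap.fst K X X).prod (LinearMap.fst K X X + LinearMap.snd K X X)) := by
  ext ⟨x, y⟩
  simp [add_eq_zero_iff_neg_eq]

/-- The embedding of the Lawrence quotient into `V × X` induced by `(x, y) ↦ (f x, x + y)`. -/
def toProd (f : X →ₗ[K] V) : LawrenceQuotient f →ₗ[K] V × X :=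
  liftQ _ ((f ∘ₗ LinearMap.fst K X X).prod (LinearMap.fst K X X + LinearMap.snd K X X))
    (map_antidiagonal_ker_eq_ker_prod f).le

lemma toProd_injective (f : X →ₗ[K] V) : Function.Injective (toProd f) :=
  LinearMap.ker_eq_bot.1 (ker_liftQ_eq_bot' _ _ (map_antidiagonal_ker_eq_ker_prod f))

lemma toProd_pos (f : X →ₗ[K] V) (x : X) : toProd f (pos f x) = (f x, x) := by
  simp [toProd, pos]

lemma toProd_neg (f : X →ₗ[K] V) (y : X) : toProd f (neg f y) = (0, y) := by
  simp [toProd, neg]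

lemma linearIndependent_sumElim_pos_neg (f : X →ₗ[K] V) {δ : ι → X} {S Q : Set ι}
    (hδ : LinearIndepOn K δ S) (hQ : LinearIndepOn K (f ∘ δ) Q) :
    LinearIndependent K
      (Sum.elim (fun q : Q ↦ pos f (δ q)) (fun e : S ↦ neg f (δ e))) := by
  have hneg : LinearIndependent K (fun e : S ↦ neg f (δ e)) := by
    refine .of_comp (LinearMap.snd K V X ∘ₗ toProd f) ?_
    simpa [Function.comp_def, toProd_neg] using hδ.linearIndependent
  refine linearIndependent_sumElim_of_map_eq_zero (f := LinearMap.fst K V X ∘ₗ toProd f) ?_ hneg ?_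
  · simpa [Function.comp_def, toProd_pos] using hQ.linearIndependent
  · simp [toProd_neg]

lemma map_toProd_span_pos_union_neg (f : X →ₗ[K] V) (δ : ι → X) {S Q : Set ι} (hQS : Q ⊆ S) :
    (span K ((pos f ∘ δ) '' Q ∪ (neg f ∘ δ) '' S)).map (toProd f) =
      (span K ((f ∘ δ) '' Q)).prod (span K (δ '' S)) := by
  rw [map_span, image_union, image_image, image_image,
    ← span_image_prodMk_union_image_zero_prodMk _ _ hQS]
  simp only [Function.comp_apply, toProd_pos, toProd_neg]

lemma span_range_sumElim_pos_neg (f : X →ₗ[K] V) (δ : ι → X) {S Q : Set ι} (hQS : Q ⊆ S)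
    (hQspan : span K ((f ∘ δ) '' Q) = span K ((f ∘ δ) '' S)) :
    span K (range (Sum.elim (fun q : Q ↦ pos f (δ q)) (fun e : S ↦ neg f (δ e)))) =
      span K ((pos f ∘ δ) '' S ∪ (neg f ∘ δ) '' S) := by
  have hrange : range (Sum.elim (fun q : Q ↦ pos f (δ q)) (fun e : S ↦ neg f (δ e))) =
      (pos f ∘ δ) '' Q ∪ (neg f ∘ δ) '' S := by
    simp only [Sum.elim_range, image_eq_range, Function.comp_apply]
  apply map_injective_of_injective (toProd_injective f)
  rw [hrange, map_toProd_span_pos_union_neg f δ hQS,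
    map_toProd_span_pos_union_neg f δ Subset.rfl, hQspan]

end LawrenceQuotient

open LawrenceQuotient in
theorem rho_basis_of_V2_general [StrongRankCondition K] (f : X →ₗ[K] V) (δ : ι → X)
    {S Q : Set ι} (hS : S.Finite) (hQS : Q ⊆ S) (hδ : LinearIndepOn K δ S)
    (hQindep : LinearIndepOn K (f ∘ δ) Q)
    (hQspan : span K ((f ∘ δ) '' Q) = span K ((f ∘ δ) '' S)) :
    LinearIndependent K (Sum.elim (fun q : Q ↦ pos f (δ q)) (fun e : S ↦ neg f (δ e))) ∧
    span K (range (Sum.elim (fun q : Q ↦ pos f (δ q)) (fun e : S ↦ neg f (δ e)))) =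
      span K ((pos f ∘ δ) '' S ∪ (neg f ∘ δ) '' S) ∧
    Module.finrank K (span K ((pos f ∘ δ) '' S ∪ (neg f ∘ δ) '' S)) = Q.ncard + S.ncard := by
  have hindep := linearIndependent_sumElim_pos_neg f hδ hQindep
  have hspan := span_range_sumElim_pos_neg f δ hQS hQspan
  refine ⟨hindep, hspan, ?_⟩
  have := hS.to_subtype
  have := (hS.subset hQS).to_subtype
  rw [← hspan, Module.finrank_eq_nat_card_basis (Module.Basis.span hindep), Nat.card_sum,
    Nat.card_coe_set_eq, Nat.card_coe_set_eq]

end Lawrence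

omit [FiniteDimensional ℝ M] in
lemma toN_comp_single (a : E → (M →ₗ[ℝ] ℝ)) : toN a ∘ (fun e ↦ Pi.single e 1) = a := by
  ext e : 1
  simp [toN]

/-- Basis claim (4.1) from the proof of Proposition 4.1: if `(a_q)_{q ∈ Q}` is a basis of
`span {a_e : e ∈ S}`, then `{ρ_q^+ : q ∈ Q} ∪ {ρ_e^- : e ∈ S}` is a basis of
`V₂ = span {ρ_e^+, ρ_e^- : e ∈ S}`; in particular `dim V₂ = |Q| + |S|`. -/
theorem rho_basis_of_V2
    (a : E → (M →ₗ[ℝ] ℝ)) (r : E → ℝ)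
    (ha : ∀ e, a e ≠ 0) (hspan : Submodule.span ℝ (Set.range a) = ⊤)
    (S Q : Set E) (hQS : Q ⊆ S)
    (hQindep : LinearIndependent ℝ (fun q : Q => a (q : E)))
    (hQspan : Submodule.span ℝ (a '' Q) = Submodule.span ℝ (a '' S)) :
    LinearIndependent ℝ
        (Sum.elim (fun q : Q => rhoP a (q : E)) (fun e : S => rhoM a (e : E))) ∧
    Submodule.span ℝ
        (Set.range (Sum.elim (fun q : Q => rhoP a (q : E)) (fun e : S => rhoM a (e : E)))) =
      Submodule.span ℝ ((rhoP a '' S) ∪ (rhoM a '' S)) ∧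
    Module.finrank ℝ (Submodule.span ℝ ((rhoP a '' S) ∪ (rhoM a '' S))) =
      Q.ncard + S.ncard := by
  exact rho_basis_of_V2_general (toN a) (fun e ↦ Pi.single e 1) S.toFinite hQS
    ((Pi.linearIndependent_single_one E ℝ).linearIndepOn S)
    (by rwa [toN_comp_single]) (by rwa [toN_comp_single])

end
end

section
/- Let K be an infinite field, V a finite-dimensional K-vector space, E a finite set, a : E → V a family of nonzero vectors, and S ⊆ E. Then there exists a K-linear functional f : V → K such that {e ∈ E : f(a_e) = 0} = S if and only if S is a flat of the configuration a, i.e. S = {e ∈ E : a_e ∈ span{a_s : s ∈ S}}. -/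
open Set Submodule

/-!
The zero set `{e | f (a e) = 0}` is the preimage under `a` of the subspace `ker f`, hence closed for
the Galois connection between `S ↦ span K (a '' S)` and `p ↦ a ⁻¹' p`, whose closed sets are the
flats. Conversely, if `S` is a flat, then the vectors `a e` with `e ∉ S` stay nonzero in the
quotient of `V` by `span K (a '' S)`. The functionals on this quotient that kill one of them form a
proper subspace of its dual, and a vector space over `K` is not a union of finitely many, fewer than
`|K|`, proper subspaces.
-/

section Semiring

variable {R M E : Type*} [Semiring R] [AddCommMonoid M] [Module R M]

theorem galoisConnection_span_image_preimage (a : E → M) :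
    GaloisConnection (fun S : Set E ↦ span R (a '' S)) fun p : Submodule R M ↦ a ⁻¹' p :=
  Set.image_preimage.compose (Submodule.gi R M).gc

theorem preimage_span_image_preimage (a : E → M) (p : Submodule R M) :
    a ⁻¹' span R (a '' (a ⁻¹' p)) = a ⁻¹' p :=
  (galoisConnection_span_image_preimage a).u_l_u_eq_u p

end Semiring

section Field

variable {K V E : Type*} [Field K] [AddCommGroup V] [Module K V]

theorem exists_dual_forall_mem_ne_zero_of_encard_lt {t : Set V} (h₀ : 0 ∉ t)
    (ht : t.encard < ENat.card K) : ∃ f : Module.Dual K V, ∀ v ∈ t, f v ≠ 0 := by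
  have : Fintype t := (encard_lt_top_iff.mp (ht.trans_le le_top)).fintype
  let vanishing (v : t) : Submodule K (Module.Dual K V) := LinearMap.ker (Module.Dual.eval K V v)
  have vanishing_ne_top (v : t) : vanishing v ≠ ⊤ := by
    obtain ⟨f, hf⟩ := Module.Projective.exists_dual_ne_zero K (ne_of_mem_of_not_mem v.2 h₀)
    exact fun h ↦ hf (h ▸ mem_top : f ∈ vanishing v)
  have card_lt : (Finset.univ : Finset t).card < ENat.card K := by
    rwa [Finset.card_univ, ← ENat.card_eq_coe_fintype_card]
  obtain ⟨f, hf⟩ := (ne_univ_iff_exists_notMem _).mp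
    (iUnion_ssubset_of_forall_ne_top_of_card_lt Finset.univ vanishing vanishing_ne_top card_lt).ne
  exact ⟨f, fun v hv hfv ↦ hf (mem_iUnion₂.mpr ⟨⟨v, hv⟩, Finset.mem_univ _, hfv⟩)⟩

theorem exists_dual_le_ker_forall_mem_ne_zero_of_disjoint {p : Submodule K V} {t : Set V}
    (hpt : Disjoint (p : Set V) t) (ht : t.encard < ENat.card K) :
    ∃ f : Module.Dual K V, p ≤ LinearMap.ker f ∧ ∀ v ∈ t, f v ≠ 0 := by
  have zero_notMem : 0 ∉ p.mkQ '' t := by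
    rintro ⟨v, hv, hv₀⟩
    exact disjoint_right.mp hpt hv ((Submodule.Quotient.mk_eq_zero p).mp hv₀)
  obtain ⟨g, hg⟩ := exists_dual_forall_mem_ne_zero_of_encard_lt zero_notMem
    ((encard_image_le _ _).trans_lt ht)
  exact ⟨g ∘ₗ p.mkQ, p.ker_mkQ.ge.trans (LinearMap.ker_le_ker_comp _ _),
    fun v hv ↦ hg _ (mem_image_of_mem _ hv)⟩

theorem exists_functional_vanishing_iff_flat_general (a : E → V) (S : Set E)
    (hS : (a '' Sᶜ).encard < ENat.card K) :
    (∃ f : V →ₗ[K] K, {e : E | f (a e) = 0} = S) ↔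
      S = {e : E | a e ∈ Submodule.span K (a '' S)} := by
  constructor
  · rintro ⟨f, rfl⟩
    exact (preimage_span_image_preimage a (LinearMap.ker f)).symm
  · intro hflat
    have hdisj : Disjoint (span K (a '' S) : Set V) (a '' Sᶜ) := by
      rw [disjoint_right, forall_mem_image]
      exact fun e he hspan ↦ he (hflat.ge hspan)
    obtain ⟨f, hker, hne⟩ := exists_dual_le_ker_forall_mem_ne_zero_of_disjoint hdisj hS
    refine ⟨f, Subset.antisymm (fun e he ↦ ?_) fun e he ↦ ?_⟩
    · exact not_not.mp fun heS ↦ hne (a e) (mem_image_of_mem a heS) he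
    · exact hker (subset_span (mem_image_of_mem a he))

end Field

/-- Combinatorial core of Proposition 5.1: for an infinite field `K` and a configuration
`a : E → V` of nonzero vectors, there is a linear functional vanishing exactly on
`{a_e : e ∈ S}` iff `S` is a flat of the configuration. -/
theorem exists_functional_vanishing_iff_flat
    {K : Type*} [Field K] [Infinite K]
    {V : Type*} [AddCommGroup V] [Module K V] [FiniteDimensional K V]
    {E : Type*} [Fintype E]
    (a : E → V) (ha : ∀ e, a e ≠ 0) (S : Set E) :
    (∃ f : V →ₗ[K] K, {e : E | f (a e) = 0} = S) ↔
      S = {e : E | a e ∈ Submodule.span K (a '' S)} := by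
  refine exists_functional_vanishing_iff_flat_general a S ?_
  simpa only [ENat.card_eq_top_of_infinite] using (toFinite (a '' Sᶜ)).encard_lt_top
end

section
/- Let E be a finite set, k ≥ 1, and let ∅ = F_0 ⊊ F_1 ⊊ ⋯ ⊊ F_k = E be a chain of subsets of E. For a nonempty subset S ⊆ E, there exist nonnegative reals c_1, …, c_{k−1} and a real number c such that the vector v = c_1·δ_{F_1} + ⋯ + c_{k−1}·δ_{F_{k−1}} + c·δ_E ∈ ℝ^E satisfies v_e > 0 for all e ∈ S and v_e = 0 for all e ∉ S, if and only if S = F_i for some 1 ≤ i ≤ k. (The support of a vector in the Bergman cone β_𝒻 is a flat of the flag 𝒻; used in the proof of Lemma 6.2.) -/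
open Set Finset

/-!
Let `v` be a vector of the Bergman cone of a chain. If every member of the chain containing `e`
also contains `x`, then `v e ≤ v x`: the only coefficient that may be negative is that of `E`, which
contributes equally to both sides. Hence the set where `v` is positive, if it is the whole support
of `v`, contains with each `e` the least member of the chain through `e`. It is therefore a union of
members of the chain, and a nonempty union of members of a finite chain is the largest of them.
-/

theorem mem_range_iff_exists_bot_lt {E ι : Type*} [PartialOrder ι] [OrderBot ι] {F : ι → Set E}
    (hbot : F ⊥ = ∅) {S : Set E} (hS : S.Nonempty) : S ∈ range F ↔ ∃ i, ⊥ < i ∧ S = F i := by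
  constructor
  · rintro ⟨i, rfl⟩
    exact ⟨i, bot_lt_iff_ne_bot.mpr fun h => hS.ne_empty (h ▸ hbot), rfl⟩
  · rintro ⟨i, -, rfl⟩
    exact mem_range_self i

theorem mem_of_isChain_of_specialization_closed {E : Type*} {𝓕 : Set (Set E)} (hfin : 𝓕.Finite)
    (hchain : IsChain (· ⊆ ·) 𝓕) {S : Set E} (hS : S.Nonempty) (hcover : S ⊆ ⋃₀ 𝓕)
    (hclosed : ∀ e ∈ S, ∀ x, (∀ A ∈ 𝓕, e ∈ A → x ∈ A) → x ∈ S) : S ∈ 𝓕 := by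
  have exists_mem_subset : ∀ e ∈ S, ∃ A ∈ 𝓕, e ∈ A ∧ A ⊆ S := by
    intro e he
    obtain ⟨A, ⟨hA, heA⟩, hmin⟩ := (hfin.sep (e ∈ ·)).exists_minimal (hcover he)
    refine ⟨A, hA, heA, fun x hxA => hclosed e he x fun B hB heB => ?_⟩
    exact (hchain.total hA hB).elim (· hxA) fun hBA => hmin ⟨hB, heB⟩ hBA hxA
  obtain ⟨e, he⟩ := hS
  obtain ⟨A₀, hA₀, -, hA₀S⟩ := exists_mem_subset e he
  obtain ⟨M, ⟨hM, hMS⟩, hmax⟩ := (hfin.sep (· ⊆ S)).exists_maximal ⟨A₀, hA₀, hA₀S⟩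
  suffices hSM : S ⊆ M from hSM.antisymm hMS ▸ hM
  intro x hx
  obtain ⟨A, hA, hxA, hAS⟩ := exists_mem_subset x hx
  exact (hchain.total hA hM).elim (· hxA) fun hMA => hmax ⟨hA, hAS⟩ hMA hxA

section BergmanCone

variable {E ι R : Type*} [Fintype ι] [Semiring R] [PartialOrder R]

variable (R) in
/-- The Bergman cone of a finite family `F` of subsets of `E`: the linear combinations of the
indicator vectors `δ_{F i}` whose coefficients are nonnegative, except that `E` may have any
coefficient. The family need not be a flag; a member `F i = ∅` contributes nothing. -/
def bergmanCone (F : ι → Set E) : Set (E → R) :=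
  {v | ∃ c : ι → R, (∀ i, F i ≠ univ → 0 ≤ c i) ∧ ∑ i, c i • (F i).indicator (1 : E → R) = v}

variable {F : ι → Set E} {v : E → R}

theorem exists_mem_of_mem_bergmanCone (hv : v ∈ bergmanCone R F) {e : E} (he : v e ≠ 0) :
    ∃ i, e ∈ F i := by
  obtain ⟨c, -, rfl⟩ := hv
  contrapose! he
  simp [he]

theorem apply_le_apply_of_mem_bergmanCone [IsOrderedAddMonoid R] (hv : v ∈ bergmanCone R F)
    {e x : E} (hex : ∀ i, e ∈ F i → x ∈ F i) : v e ≤ v x := by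
  obtain ⟨c, hc, rfl⟩ := hv
  simp only [Finset.sum_apply, Pi.smul_apply, smul_eq_mul]
  refine Finset.sum_le_sum fun i _ => ?_
  by_cases he : e ∈ F i
  · simp [he, hex i he]
  · have hci : 0 ≤ c i := hc i ((ne_univ_iff_exists_notMem _).mpr ⟨e, he⟩)
    by_cases hx : x ∈ F i <;> simp [he, hx, hci]

theorem indicator_mem_bergmanCone [ZeroLEOneClass R] (F : ι → Set E) (i : ι) :
    (F i).indicator 1 ∈ bergmanCone R F := by
  classical
  refine ⟨Pi.single i 1, fun j _ => ?_, by simp [Pi.single_apply]⟩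
  exact (Pi.single_nonneg.mpr zero_le_one : (0 : ι → R) ≤ Pi.single i 1) j

theorem mem_bergmanCone_iff_of_flag [PartialOrder ι] [BoundedOrder ι] (hF : StrictMono F)
    (hbot : F ⊥ = ∅) (htop : F ⊤ = univ) :
    v ∈ bergmanCone R F ↔ ∃ c : ι → R, (c ⊥ = 0 ∧ ∀ i, ⊥ < i → i < ⊤ → 0 ≤ c i) ∧
      ∑ i, c i • (F i).indicator (1 : E → R) = v := by
  classical
  constructor
  · rintro ⟨c, hc, rfl⟩
    refine ⟨Function.update c ⊥ 0, ⟨Function.update_self .., fun i hi hi' => ?_⟩, ?_⟩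
    · rw [Function.update_of_ne hi.ne']
      exact hc i (htop ▸ (hF hi').ne)
    · refine Finset.sum_congr rfl fun i _ => ?_
      obtain rfl | hi := eq_or_ne i ⊥
      · rw [hbot, indicator_empty', smul_zero, smul_zero]
      · rw [Function.update_of_ne hi]
  · rintro ⟨c, ⟨hc_bot, hc⟩, hv⟩
    refine ⟨c, fun i hi => ?_, hv⟩
    obtain rfl | hi_bot := eq_or_ne i ⊥
    · exact hc_bot.ge
    · exact hc i hi_bot.bot_lt (Ne.lt_top fun h => hi (h ▸ htop))

theorem exists_mem_bergmanCone_iff_of_flag [PartialOrder ι] [BoundedOrder ι] (hF : StrictMono F)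
    (hbot : F ⊥ = ∅) (htop : F ⊤ = univ) {p : (E → R) → Prop} :
    (∃ v ∈ bergmanCone R F, p v) ↔ ∃ c : ι → R, c ⊥ = 0 ∧ (∀ i, ⊥ < i → i < ⊤ → 0 ≤ c i) ∧
      p (∑ i, c i • (F i).indicator (1 : E → R)) := by
  simp only [mem_bergmanCone_iff_of_flag hF hbot htop, exists_exists_and_eq_and]
  simp only [and_assoc]

theorem bergman_support_iff_general [IsStrictOrderedRing R]
    (hF : IsChain (· ⊆ ·) (range F)) {S : Set E} (hS : S.Nonempty) :
    (∃ v ∈ bergmanCone R F, (∀ e ∈ S, 0 < v e) ∧ ∀ e ∉ S, v e = 0) ↔ S ∈ range F := by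
  constructor
  · rintro ⟨v, hv, hpos, hzero⟩
    have hcover : S ⊆ ⋃₀ range F := fun e he => by
      simpa using exists_mem_of_mem_bergmanCone hv (hpos e he).ne'
    refine mem_of_isChain_of_specialization_closed (finite_range F) hF hS hcover ?_
    intro e he x hex
    by_contra hx
    have hle : v e ≤ v x := apply_le_apply_of_mem_bergmanCone hv (forall_mem_range.mp hex)
    exact (hpos e he).not_ge (hzero x hx ▸ hle)
  · rintro ⟨i, rfl⟩
    exact ⟨_, indicator_mem_bergmanCone F i, fun e he => by simp [he], fun e he => by simp [he]⟩

end BergmanCone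

/-- Support of a vector in the Bergman cone `β_𝒻` (used in the proof of Lemma 6.2):
given a chain `∅ = F_0 ⊊ F_1 ⊊ ⋯ ⊊ F_k = E`, a nonempty `S ⊆ E` is the support of a vector
`c_1 δ_{F_1} + ⋯ + c_{k-1} δ_{F_{k-1}} + c δ_E` with `c_1, …, c_{k-1} ≥ 0`, `c ∈ ℝ`
iff `S = F_i` for some `1 ≤ i ≤ k`. -/
theorem bergman_support_iff
    {E : Type*} [Fintype E]
    (k : ℕ) (hk : 1 ≤ k) (F : Fin (k + 1) → Set E)
    (hs : StrictMono F) (h0 : F 0 = ∅) (hl : F (Fin.last k) = Set.univ)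
    (S : Set E) (hS : S.Nonempty) :
    (∃ c : Fin (k + 1) → ℝ, c 0 = 0 ∧ (∀ i : Fin (k + 1), 0 < i.val → i.val < k → 0 ≤ c i) ∧
      (∀ e ∈ S, 0 < (∑ i : Fin (k + 1), c i • (F i).indicator (1 : E → ℝ)) e) ∧
      (∀ e ∉ S, (∑ i : Fin (k + 1), c i • (F i).indicator (1 : E → ℝ)) e = 0)) ↔
    ∃ i : Fin (k + 1), 1 ≤ i.val ∧ S = F i := by
  exact (exists_mem_bergmanCone_iff_of_flag hs h0 hl).symm.trans <|
    (bergman_support_iff_general hs.monotone.isChain_range hS).trans <|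
      mem_range_iff_exists_bot_lt h0 hS
end
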